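/- (Discrete strict convexity of the pairwise second-coefficient function.) For a natural number n ≥ 4, define h(x) = x(x+1)(x+2)(2n − (x+1)). Then for all natural numbers a, b with a + 2 ≤ b ≤ n − 2, one has h(⌊(a+b)/2⌋) + h(⌈(a+b)/2⌉) < h(a) + h(b). Consequently, over tuples of natural numbers (c_1, …, c_k) with fixed sum and each c_i ≤ n − 2, the sum Σ_i h(c_i) is minimized only when the c_i differ pairwise by at most 1. -/

import Mathlib

/-!
The second difference of `h` is `h(x + 2) - 2 h(x + 1) + h(x) = 12 (x + 2) (n - 2 - x)`, which is
positive for `x < n - 2`. Hence, whenever `a + 2 ≤ b ≤ n - 2`, moving `a` and `b` one unit towards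
each other strictly decreases `h(a) + h(b)` (`hfun_step`). Repeating the move until the two numbers
differ by at most one gives the midpoint inequality (`hfun_mid`). Applying it once to two entries
of a tuple that differ by at least two keeps the sum of the entries and the bound `n - 2` but
lowers `∑ h(c_i)`, so such a tuple is not a minimizer.
-/

open Finset

/-- `h(x) = x(x+1)(x+2)(2n - (x+1))`, whose value (divided by 12) is the second
coefficient of the pairwise-reliability polynomial contributed by a chain of
`x` internal nodes in a graph with `n` nodes. -/
def hfun (n x : ℕ) : ℕ := x * (x + 1) * (x + 2) * (2 * n - (x + 1))

/-- The outward move `(a + 1, b - 1) ↦ (a, b)`, with `b = a + d + 2` and `n - 2 = b + e`,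
increases the sum of `h`. The difference is `∑ 12 (x + 2) (n - 2 - x)` over `a ≤ x ≤ a + d`. -/
lemma hfun_step_aux (a d e : ℕ) :
    hfun (a + d + 4 + e) (a + 1) + hfun (a + d + 4 + e) (a + d + 1) <
      hfun (a + d + 4 + e) a + hfun (a + d + 4 + e) (a + d + 2) := by
  unfold hfun
  rw [show 2 * (a + d + 4 + e) - (a + 1 + 1) = a + 2 * d + 6 + 2 * e by omega,
    show 2 * (a + d + 4 + e) - (a + d + 1 + 1) = a + d + 6 + 2 * e by omega,
    show 2 * (a + d + 4 + e) - (a + 1) = a + 2 * d + 7 + 2 * e by omega,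
    show 2 * (a + d + 4 + e) - (a + d + 2 + 1) = a + d + 5 + 2 * e by omega]
  zify
  -- The right side is the difference of the two sums, written in closed form.
  have h : (0 : ℤ) < 12 * (d + 1) * (a + 2) * (e + 2) + 6 * d * (d + 1) * (a + e + 4)
      + 2 * d * (d + 1) * (d - 1) := by
    -- The factor `d - 1` is negative only at `d = 0`, where its term vanishes.
    rcases d with _ | d
    · norm_num; positivity
    · push_cast
      rw [add_sub_cancel_right]
      positivity
  linarith

lemma hfun_step {n a b : ℕ} (hab : a + 2 ≤ b) (hb : b ≤ n - 2) :
    hfun n (a + 1) + hfun n (b - 1) < hfun n a + hfun n b := by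
  obtain ⟨d, rfl⟩ := Nat.exists_eq_add_of_le hab
  obtain ⟨e, rfl⟩ : ∃ e, n = a + d + 4 + e := ⟨n - (a + d + 4), by omega⟩
  have := hfun_step_aux a d e
  rwa [show a + 2 + d - 1 = a + d + 1 by omega, show a + 2 + d = a + d + 2 by omega]

lemma hfun_mid (n : ℕ) (a b : ℕ) (hab : a + 2 ≤ b) (hb : b ≤ n - 2) :
    hfun n ((a + b) / 2) + hfun n ((a + b + 1) / 2) < hfun n a + hfun n b := by
  have h := hfun_step hab hb
  by_cases hc : a + 1 + 2 ≤ b - 1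
  · have ih := hfun_mid n (a + 1) (b - 1) hc (by omega)
    rw [show a + 1 + (b - 1) = a + b by omega] at ih
    exact ih.trans h
  · rwa [show (a + b) / 2 = a + 1 by omega, show (a + b + 1) / 2 = b - 1 by omega]
termination_by b - a

/-- Moving one unit from entry `j` to entry `i` changes only these two terms of a sum. -/
lemma sum_transfer {k : ℕ} (c : Fin k → ℕ) {i j : Fin k} (hij : i ≠ j) (f : ℕ → ℕ) :
    ∑ l, f (Function.update (Function.update c i (c i + 1)) j (c j - 1) l) + (f (c i) + f (c j)) =
      ∑ l, f (c l) + (f (c i + 1) + f (c j - 1)) := by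
  have hi : i ∈ (univ : Finset (Fin k)).erase j := by simp [hij]
  rw [← add_sum_erase univ _ (mem_univ j), ← add_sum_erase _ _ hi,
    ← add_sum_erase univ (fun l => f (c l)) (mem_univ j), ← add_sum_erase _ (fun l => f (c l)) hi]
  have hrest : ∑ l ∈ (univ.erase j).erase i,
      f (Function.update (Function.update c i (c i + 1)) j (c j - 1) l) =
      ∑ l ∈ (univ.erase j).erase i, f (c l) := by
    refine sum_congr rfl fun l hl => ?_
    simp only [mem_erase] at hl
    rw [Function.update_of_ne hl.2.1, Function.update_of_ne hl.1]
  rw [hrest, Function.update_self, Function.update_of_ne hij, Function.update_self]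
  ring

/-- Discrete strict convexity of the pairwise second-coefficient function: for
`n ≥ 4` and naturals `a + 2 ≤ b ≤ n - 2`,
`h(⌊(a+b)/2⌋) + h(⌈(a+b)/2⌉) < h(a) + h(b)`. Consequently, over tuples of
naturals with fixed sum and entries at most `n - 2`, `∑ h(c_i)` is minimized
only when the entries pairwise differ by at most `1`. -/
theorem pairwise_second_coeff_convexity (n : ℕ) (hn : 4 ≤ n) :
    (∀ a b : ℕ, a + 2 ≤ b → b ≤ n - 2 →
      hfun n ((a + b) / 2) + hfun n ((a + b + 1) / 2) < hfun n a + hfun n b) ∧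
    (∀ (k : ℕ) (c : Fin k → ℕ), (∀ i, c i ≤ n - 2) →
      (∀ d : Fin k → ℕ, (∀ i, d i ≤ n - 2) → (∑ i, d i) = (∑ i, c i) →
        ∑ i, hfun n (c i) ≤ ∑ i, hfun n (d i)) →
      ∀ i j, |(c i : ℤ) - (c j : ℤ)| ≤ 1) := by
  refine ⟨hfun_mid n, fun k c hc hmin => ?_⟩
  have key : ∀ i j, c j ≤ c i + 1 := by
    intro i j
    by_contra! hlt
    have hij : i ≠ j := by
      rintro rfl
      omega
    have hsum := sum_transfer c hij id
    have hval := sum_transfer c hij (hfun n)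
    have hstep := hfun_step (n := n) (a := c i) (b := c j) (by omega) (hc j)
    have hle := hmin (Function.update (Function.update c i (c i + 1)) j (c j - 1)) ?_ ?_
    · omega
    · intro l
      have hl := hc l
      have hj := hc j
      simp only [Function.update_apply]
      split_ifs <;> omega
    · simp only [id] at hsum
      omega
  intro i j
  have h1 := key i j
  have h2 := key j i
  rw [abs_le]
  omega
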